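/- The subgroups of the unit quaternion group defined below have the following orders: C_n has exactly n elements (for n ≥ 1), the binary dihedral group D*₄ₙ has exactly 4n elements (for n ≥ 2), the binary tetrahedral group T* has exactly 24 elements, the binary octahedral group O* has exactly 48 elements, and the binary icosahedral group I* has exactly 120 elements. -/

import Mathlib

open Quaternion
open scoped Quaternion

/-- The group of unit quaternions `S³`. -/
noncomputable abbrev UnitQuat : Type := Metric.sphere (0 : ℍ[ℝ]) 1

/-- The quaternion `cos(2π/n) + sin(2π/n) i`, a primitive `n`-th root of unity. -/
noncomputable def zetaQ (n : ℕ) : ℍ[ℝ] :=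
  ⟨Real.cos (2 * Real.pi / n), Real.sin (2 * Real.pi / n), 0, 0⟩

/-- The quaternion `i`. -/
def iQ : ℍ[ℝ] := ⟨0, 1, 0, 0⟩

/-- The quaternion `j`. -/
def jQ : ℍ[ℝ] := ⟨0, 0, 1, 0⟩

/-- The quaternion `ω = (1 + i + j + k)/2`. -/
noncomputable def omegaQ : ℍ[ℝ] := ⟨1/2, 1/2, 1/2, 1/2⟩

/-- The quaternion `(√2/2)(1 + j)`. -/
noncomputable def sigmaQ : ℍ[ℝ] := ⟨Real.sqrt 2 / 2, 0, Real.sqrt 2 / 2, 0⟩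

/-- The golden ratio `τ = (1 + √5)/2`. -/
noncomputable def tau : ℝ := (1 + Real.sqrt 5) / 2

/-- The quaternion `(τ⁻¹ + τ j + k)/2`. -/
noncomputable def iotaQ : ℍ[ℝ] := ⟨tau⁻¹ / 2, 0, tau / 2, 1 / 2⟩

/-- The cyclic subgroup `C_n` of the unit quaternions, generated by
`ζ_n = cos(2π/n) + sin(2π/n) i`. -/
noncomputable def CyclicQ (n : ℕ) : Subgroup UnitQuat :=
  Subgroup.closure {x : UnitQuat | (x : ℍ[ℝ]) = zetaQ n}

/-- The binary dihedral subgroup `D*₄ₙ` of the unit quaternions, generated by `ζ_{2n}`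
and `j`. -/
noncomputable def BinDihQ (n : ℕ) : Subgroup UnitQuat :=
  Subgroup.closure {x : UnitQuat | (x : ℍ[ℝ]) = zetaQ (2 * n) ∨ (x : ℍ[ℝ]) = jQ}

/-- The binary tetrahedral subgroup `T*` of the unit quaternions, generated by `i`, `j`
and `ω = (1 + i + j + k)/2`. -/
noncomputable def BinTetQ : Subgroup UnitQuat :=
  Subgroup.closure
    {x : UnitQuat | (x : ℍ[ℝ]) = iQ ∨ (x : ℍ[ℝ]) = jQ ∨ (x : ℍ[ℝ]) = omegaQ}

/-- The binary octahedral subgroup `O*` of the unit quaternions, generated by `T*` and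
`(√2/2)(1 + j)`. -/
noncomputable def BinOctQ : Subgroup UnitQuat :=
  Subgroup.closure ((BinTetQ : Set UnitQuat) ∪ {x : UnitQuat | (x : ℍ[ℝ]) = sigmaQ})

/-- The binary icosahedral subgroup `I*` of the unit quaternions, generated by `T*` and
`(τ⁻¹ + τ j + k)/2`. -/
noncomputable def BinIcoQ : Subgroup UnitQuat :=
  Subgroup.closure ((BinTetQ : Set UnitQuat) ∪ {x : UnitQuat | (x : ℍ[ℝ]) = iotaQ})

/-- Integer model: the octuple `(x₀,y₀,…,x₃,y₃)` stands for the quaternion with coordinates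
`(xᵢ + yᵢ θ)/2`. -/
structure QW where
  x0 : ℤ
  y0 : ℤ
  x1 : ℤ
  y1 : ℤ
  x2 : ℤ
  y2 : ℤ
  x3 : ℤ
  y3 : ℤ
  deriving DecidableEq

namespace QW

/-- Interpretation of the model. -/
noncomputable def val (θ : ℝ) (w : QW) : ℍ[ℝ] :=
  ⟨(w.x0 + w.y0 * θ) / 2, (w.x1 + w.y1 * θ) / 2, (w.x2 + w.y2 * θ) / 2, (w.x3 + w.y3 * θ) / 2⟩

/-- Twice the product, where `θ² = p + q θ`. -/
def raw (p q : ℤ) (a b : QW) : QW where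
  x0 := (a.x0*b.x0 - a.x1*b.x1 - a.x2*b.x2 - a.x3*b.x3)
    + p * (a.y0*b.y0 - a.y1*b.y1 - a.y2*b.y2 - a.y3*b.y3)
  y0 := (a.x0*b.y0 - a.x1*b.y1 - a.x2*b.y2 - a.x3*b.y3)
    + (a.y0*b.x0 - a.y1*b.x1 - a.y2*b.x2 - a.y3*b.x3)
    + q * (a.y0*b.y0 - a.y1*b.y1 - a.y2*b.y2 - a.y3*b.y3)
  x1 := (a.x0*b.x1 + a.x1*b.x0 + a.x2*b.x3 - a.x3*b.x2)
    + p * (a.y0*b.y1 + a.y1*b.y0 + a.y2*b.y3 - a.y3*b.y2)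
  y1 := (a.x0*b.y1 + a.x1*b.y0 + a.x2*b.y3 - a.x3*b.y2)
    + (a.y0*b.x1 + a.y1*b.x0 + a.y2*b.x3 - a.y3*b.x2)
    + q * (a.y0*b.y1 + a.y1*b.y0 + a.y2*b.y3 - a.y3*b.y2)
  x2 := (a.x0*b.x2 - a.x1*b.x3 + a.x2*b.x0 + a.x3*b.x1)
    + p * (a.y0*b.y2 - a.y1*b.y3 + a.y2*b.y0 + a.y3*b.y1)
  y2 := (a.x0*b.y2 - a.x1*b.y3 + a.x2*b.y0 + a.x3*b.y1)
    + (a.y0*b.x2 - a.y1*b.x3 + a.y2*b.x0 + a.y3*b.x1)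
    + q * (a.y0*b.y2 - a.y1*b.y3 + a.y2*b.y0 + a.y3*b.y1)
  x3 := (a.x0*b.x3 + a.x1*b.x2 - a.x2*b.x1 + a.x3*b.x0)
    + p * (a.y0*b.y3 + a.y1*b.y2 - a.y2*b.y1 + a.y3*b.y0)
  y3 := (a.x0*b.y3 + a.x1*b.y2 - a.x2*b.y1 + a.x3*b.y0)
    + (a.y0*b.x3 + a.y1*b.x2 - a.y2*b.x1 + a.y3*b.x0)
    + q * (a.y0*b.y3 + a.y1*b.y2 - a.y2*b.y1 + a.y3*b.y0)

/-- Doubling. -/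
def dbl (a : QW) : QW :=
  ⟨2*a.x0, 2*a.y0, 2*a.x1, 2*a.y1, 2*a.x2, 2*a.y2, 2*a.x3, 2*a.y3⟩

/-- Halving. -/
def half (a : QW) : QW :=
  ⟨a.x0/2, a.y0/2, a.x1/2, a.y1/2, a.x2/2, a.y2/2, a.x3/2, a.y3/2⟩

theorem val_mul {θ : ℝ} {p q : ℤ} (hθ : θ * θ = p + q * θ) {a b c : QW}
    (h : raw p q a b = dbl c) : val θ a * val θ b = val θ c := by
  obtain ⟨a0, b0, a1, b1, a2, b2, a3, b3⟩ := a
  obtain ⟨c0, d0, c1, d1, c2, d2, c3, d3⟩ := b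
  obtain ⟨e0, f0, e1, f1, e2, f2, e3, f3⟩ := c
  simp only [raw, dbl, QW.mk.injEq] at h
  obtain ⟨h0, k0, h1, k1, h2, k2, h3, k3⟩ := h
  have g0 := congrArg (Int.cast : ℤ → ℝ) h0
  have l0 := congrArg (Int.cast : ℤ → ℝ) k0
  have g1 := congrArg (Int.cast : ℤ → ℝ) h1
  have l1 := congrArg (Int.cast : ℤ → ℝ) k1
  have g2 := congrArg (Int.cast : ℤ → ℝ) h2
  have l2 := congrArg (Int.cast : ℤ → ℝ) k2
  have g3 := congrArg (Int.cast : ℤ → ℝ) h3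
  have l3 := congrArg (Int.cast : ℤ → ℝ) k3
  push_cast at g0 l0 g1 l1 g2 l2 g3 l3
  ext
  · rw [Quaternion.re_mul]; simp only [val]
    linear_combination (1/4) * g0 + (θ/4) * l0
      + (1/4) * ((b0:ℝ)*d0 - b1*d1 - b2*d2 - b3*d3) * hθ
  · rw [Quaternion.imI_mul]; simp only [val]
    linear_combination (1/4) * g1 + (θ/4) * l1
      + (1/4) * ((b0:ℝ)*d1 + b1*d0 + b2*d3 - b3*d2) * hθ
  · rw [Quaternion.imJ_mul]; simp only [val]
    linear_combination (1/4) * g2 + (θ/4) * l2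
      + (1/4) * ((b0:ℝ)*d2 - b1*d3 + b2*d0 + b3*d1) * hθ
  · rw [Quaternion.imK_mul]; simp only [val]
    linear_combination (1/4) * g3 + (θ/4) * l3
      + (1/4) * ((b0:ℝ)*d3 + b1*d2 - b2*d1 + b3*d0) * hθ

theorem coord_inj {θ : ℝ} (hθ : Irrational θ) {a b c d : ℤ}
    (h : ((a:ℝ) + b * θ) / 2 = (c + d * θ) / 2) : a = c ∧ b = d := by
  have h' : ((b - d : ℤ) : ℝ) * θ = ((c - a : ℤ) : ℝ) := by
    push_cast; linarith
  have hbd : b - d = 0 := by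
    by_contra hne
    exact (hθ.intCast_mul hne) ⟨((c - a : ℤ) : ℚ), by rw [h']; push_cast; rfl⟩
  rw [hbd] at h'
  have : c - a = 0 := by
    have h2 : ((c - a : ℤ) : ℝ) = 0 := by rw [← h']; simp
    exact_mod_cast h2
  omega

theorem val_inj {θ : ℝ} (hθ : Irrational θ) : Function.Injective (val θ) := by
  intro a b h
  have h0 := coord_inj hθ (congrArg (fun z : ℍ[ℝ] => z.re) h)
  have h1 := coord_inj hθ (congrArg (fun z : ℍ[ℝ] => z.imI) h)
  have h2 := coord_inj hθ (congrArg (fun z : ℍ[ℝ] => z.imJ) h)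
  have h3 := coord_inj hθ (congrArg (fun z : ℍ[ℝ] => z.imK) h)
  cases a; cases b
  simp_all

/-- `w` is the model of an element of `H`. -/
def Real' (θ : ℝ) (H : Subgroup UnitQuat) (w : QW) : Prop := ∃ x ∈ H, (x : ℍ[ℝ]) = val θ w

/-- All products of elements of two lists. -/
def prodL (p q : ℤ) (A B : List QW) : List QW :=
  A.flatMap fun a => B.map fun b => half (raw p q a b)

theorem real_mul {θ : ℝ} {p q : ℤ} (hθ : θ * θ = p + q * θ) {H : Subgroup UnitQuat} {a b c : QW}
    (ha : Real' θ H a) (hb : Real' θ H b) (h : raw p q a b = dbl c) : Real' θ H c := by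
  obtain ⟨x, hx, hxa⟩ := ha
  obtain ⟨y, hy, hyb⟩ := hb
  refine ⟨x * y, H.mul_mem hx hy, ?_⟩
  rw [← val_mul hθ h, ← hxa, ← hyb]; rfl

theorem real_prodL {θ : ℝ} {p q : ℤ} (hθ : θ * θ = p + q * θ) {H : Subgroup UnitQuat}
    {A B : List QW} (hA : ∀ a ∈ A, Real' θ H a) (hB : ∀ a ∈ B, Real' θ H a)
    (hev : ∀ a ∈ A, ∀ b ∈ B, raw p q a b = dbl (half (raw p q a b))) :
    ∀ w ∈ prodL p q A B, Real' θ H w := by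
  intro w hw
  simp only [prodL, List.mem_flatMap, List.mem_map] at hw
  obtain ⟨a, ha, b, hb, rfl⟩ := hw
  exact real_mul hθ (hA a ha) (hB b hb) (hev a ha b hb)

/-- The unit. -/
def one : QW := ⟨2, 0, 0, 0, 0, 0, 0, 0⟩

theorem val_one (θ : ℝ) : val θ one = 1 := by
  ext <;> simp [val, one]

theorem real_one (θ : ℝ) (H : Subgroup UnitQuat) : Real' θ H one :=
  ⟨1, H.one_mem, by rw [val_one]; rfl⟩

theorem closure_eq_of_stable {G : Type*} [Group G] {A S : Set G} (hS : S.Finite) (h1 : (1:G) ∈ S)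
    (hA : ∀ a ∈ A, ∀ s ∈ S, a * s ∈ S) : ((Subgroup.closure A : Subgroup G) : Set G) ⊆ S := by
  have key : Subgroup.closure A ≤
      ({ carrier := {x | ∀ s, s ∈ S ↔ x * s ∈ S}
         one_mem' := by intro s; simp
         mul_mem' := by
          intro a b ha hb s
          rw [hb s, ha (b * s), mul_assoc]
         inv_mem' := by
          intro a ha s
          rw [ha (a⁻¹ * s)]; simp } : Subgroup G) := by
    rw [Subgroup.closure_le]
    intro a ha
    have himg : (fun s => a * s) '' S = S := by
      refine Set.eq_of_subset_of_ncard_le ?_ ?_ hS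
      · rintro _ ⟨s, hs, rfl⟩; exact hA a ha s hs
      · rw [Set.ncard_image_of_injective _ (mul_right_injective a)]
    intro s
    refine ⟨hA a ha s, fun h => ?_⟩
    rw [← himg] at h
    obtain ⟨t, ht, hts⟩ := h
    rwa [← mul_left_cancel hts]
  intro x hx
  have := (key hx) 1
  rw [mul_one] at this
  exact this.1 h1

theorem card_closure {θ : ℝ} {p q : ℤ} (hθ : θ * θ = p + q * θ) (hirr : Irrational θ)
    {A : Set UnitQuat} (gens L : List QW) (hgen : ∀ a ∈ A, ∃ g ∈ gens, (a : ℍ[ℝ]) = val θ g)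
    (hnd : L.Nodup) (h1 : one ∈ L)
    (hcl : ∀ g ∈ gens, ∀ s ∈ L, ∃ t ∈ L, raw p q g s = dbl t)
    (hreal : ∀ w ∈ L, Real' θ (Subgroup.closure A) w) :
    Nat.card (Subgroup.closure A) = L.length := by
  have hsub : ((Subgroup.closure A : Subgroup UnitQuat) : Set UnitQuat) ⊆
      {x | ∃ w ∈ L, (x : ℍ[ℝ]) = val θ w} := by
    apply closure_eq_of_stable
    · have : ((val θ) '' {w | w ∈ L}).Finite := (List.finite_toSet L).image _
      refine (this.preimage (f := fun x : UnitQuat => (x : ℍ[ℝ]))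
        (Subtype.val_injective.injOn)).subset ?_
      rintro x ⟨w, hw, h⟩
      exact ⟨w, hw, h.symm⟩
    · exact ⟨one, h1, by rw [val_one]; rfl⟩
    · rintro a ha s ⟨w, hw, hs⟩
      obtain ⟨g, hg, hag⟩ := hgen a ha
      obtain ⟨t, ht, h⟩ := hcl g hg w hw
      refine ⟨t, ht, ?_⟩
      rw [← val_mul hθ h, ← hag, ← hs]; rfl
  choose f hf hfv using hreal
  let F : {w // w ∈ L.toFinset} → Subgroup.closure A := fun w =>
    ⟨f w.1 (List.mem_toFinset.1 w.2), hf _ _⟩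
  have hF : Function.Bijective F := by
    constructor
    · intro w w' h
      have h2 : f w.1 (List.mem_toFinset.1 w.2) = f w'.1 (List.mem_toFinset.1 w'.2) :=
        congrArg Subtype.val h
      have h3 := congrArg (fun x : UnitQuat => (x : ℍ[ℝ])) h2
      simp only [hfv] at h3
      exact Subtype.ext (val_inj hirr h3)
    · rintro ⟨x, hx⟩
      obtain ⟨w, hw, h⟩ := hsub hx
      refine ⟨⟨w, List.mem_toFinset.2 hw⟩, ?_⟩
      apply Subtype.ext
      apply Subtype.ext
      change ((f w _ : UnitQuat) : ℍ[ℝ]) = x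
      rw [hfv, h]
  rw [← Nat.card_eq_of_bijective F hF, Nat.card_eq_fintype_card, Fintype.card_coe,
    List.toFinset_card_of_nodup hnd]

/-- model of `i` -/
def mi : QW := ⟨0, 0, 2, 0, 0, 0, 0, 0⟩
/-- model of `j` -/
def mj : QW := ⟨0, 0, 0, 0, 2, 0, 0, 0⟩
/-- model of `ω` -/
def mw : QW := ⟨1, 0, 1, 0, 1, 0, 1, 0⟩
/-- model of `σ`, `θ = √2` -/
def ms : QW := ⟨0, 1, 0, 0, 0, 1, 0, 0⟩
/-- model of `ι`, `θ = τ` -/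
def mt : QW := ⟨-1, 1, 0, 0, 0, 1, 1, 0⟩

theorem val_mi (θ : ℝ) : iQ = val θ mi := by ext <;> simp [val, mi, iQ]
theorem val_mj (θ : ℝ) : jQ = val θ mj := by ext <;> simp [val, mj, jQ]
theorem val_mw (θ : ℝ) : omegaQ = val θ mw := by ext <;> simp [val, mw, omegaQ]
theorem val_ms : sigmaQ = val (Real.sqrt 2) ms := by ext <;> simp [val, ms, sigmaQ]
theorem tau_sq : tau * tau = (1:ℤ) + (1:ℤ) * tau := by
  have := Real.mul_self_sqrt (show (0:ℝ) ≤ 5 by norm_num)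
  unfold tau; push_cast; linear_combination this / 4
theorem tau_inv : tau⁻¹ = -1 + tau := by
  have h := tau_sq
  push_cast at h
  have : tau ≠ 0 := by rintro h0; rw [h0] at h; norm_num at h
  field_simp
  linear_combination -h
theorem val_mt : iotaQ = val tau mt := by ext <;> simp [val, mt, iotaQ, tau_inv]
theorem tau_irr : Irrational tau := Real.goldenRatio_irrational
theorem sqrt_two_sq : Real.sqrt 2 * Real.sqrt 2 = (2:ℤ) + (0:ℤ) * Real.sqrt 2 := by
  rw [Real.mul_self_sqrt (by norm_num)]; norm_num

/-- the product in the model -/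
def mul (p q : ℤ) (a b : QW) : QW := half (raw p q a b)

/-- powers `1, a, a², …, aⁿ` -/
def pows (p q : ℤ) (a : QW) : ℕ → List QW
  | 0 => [one]
  | n + 1 => one :: (pows p q a n).map (fun b => half (raw p q a b))

theorem real_pows {θ : ℝ} {p q : ℤ} (hθ : θ * θ = p + q * θ) {H : Subgroup UnitQuat} {a : QW}
    (ha : Real' θ H a) (n : ℕ)
    (hev : ∀ b ∈ pows p q a n, raw p q a b = dbl (half (raw p q a b))) :
    ∀ w ∈ pows p q a n, Real' θ H w := by
  induction n with
  | zero => intro w hw; simp only [pows, List.mem_singleton] at hw; subst hw; exact real_one _ _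
  | succ n ih =>
    have hsub : ∀ b ∈ pows p q a n, b ∈ pows p q a (n+1) := by
      clear ih hev
      induction n with
      | zero => intro b hb; simp only [pows, List.mem_singleton] at hb; simp [pows, hb]
      | succ n ih =>
        intro b hb
        rw [pows, List.mem_cons, List.mem_map] at hb
        rw [pows, List.mem_cons, List.mem_map]
        rcases hb with hb | ⟨c, hc, h⟩
        · exact Or.inl hb
        · exact Or.inr ⟨c, ih c hc, h⟩
    intro w hw
    rw [pows, List.mem_cons, List.mem_map] at hw
    rcases hw with rfl | ⟨c, hc, rfl⟩
    · exact real_one _ _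
    · exact real_mul hθ ha (ih (fun b hb => hev b (hsub b hb)) c hc) (hev c (hsub c hc))

/-- quaternion group -/
def LQ (p q : ℤ) : List QW := prodL p q (pows p q mi 3) (pows p q mj 1)
/-- binary tetrahedral group -/
def LT (p q : ℤ) : List QW := prodL p q (pows p q mw 2) (LQ p q)
/-- binary octahedral group -/
def LO : List QW := prodL 2 0 (pows 2 0 ms 1) (LT 2 0)
/-- binary icosahedral group -/
def LI : List QW := prodL 1 1 (pows 1 1 mt 4) (LT 1 1)

theorem real_LT {θ : ℝ} {p q : ℤ} (hθ : θ * θ = p + q * θ) {H : Subgroup UnitQuat}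
    (hi : Real' θ H mi) (hj : Real' θ H mj) (hw : Real' θ H mw)
    (ei : ∀ b ∈ pows p q mi 3, raw p q mi b = dbl (half (raw p q mi b)))
    (ej : ∀ b ∈ pows p q mj 1, raw p q mj b = dbl (half (raw p q mj b)))
    (ew : ∀ b ∈ pows p q mw 2, raw p q mw b = dbl (half (raw p q mw b)))
    (eq : ∀ a ∈ pows p q mi 3, ∀ b ∈ pows p q mj 1, raw p q a b = dbl (half (raw p q a b)))
    (et : ∀ a ∈ pows p q mw 2, ∀ b ∈ LQ p q, raw p q a b = dbl (half (raw p q a b))) :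
    ∀ w ∈ LT p q, Real' θ H w :=
  real_prodL hθ (real_pows hθ hw _ ew)
    (real_prodL hθ (real_pows hθ hi _ ei) (real_pows hθ hj _ ej) eq) et

/-- the vertex generators as elements of the unit sphere -/
theorem exists_unit {z : ℍ[ℝ]} (h : z.re^2 + z.imI^2 + z.imJ^2 + z.imK^2 = 1) :
    ∃ x : UnitQuat, (x : ℍ[ℝ]) = z := by
  refine ⟨⟨z, ?_⟩, rfl⟩
  rw [mem_sphere_zero_iff_norm]
  have h2 : ‖z‖ * ‖z‖ = 1 := by
    rw [← Quaternion.normSq_eq_norm_mul_self, Quaternion.normSq_def']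
    exact h
  nlinarith [norm_nonneg z]

theorem ex_i : ∃ x : UnitQuat, (x : ℍ[ℝ]) = iQ := exists_unit (by norm_num [iQ])
theorem ex_j : ∃ x : UnitQuat, (x : ℍ[ℝ]) = jQ := exists_unit (by norm_num [jQ])
theorem ex_w : ∃ x : UnitQuat, (x : ℍ[ℝ]) = omegaQ := exists_unit (by norm_num [omegaQ])
theorem ex_s : ∃ x : UnitQuat, (x : ℍ[ℝ]) = sigmaQ := exists_unit (by
  have := Real.sq_sqrt (show (0:ℝ) ≤ 2 by norm_num)
  simp only [sigmaQ]; linear_combination this / 2)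
theorem ex_t : ∃ x : UnitQuat, (x : ℍ[ℝ]) = iotaQ := exists_unit (by
  have := tau_sq
  push_cast at this
  simp only [iotaQ, tau_inv]; linear_combination this / 2)

theorem card_tet : Nat.card BinTetQ = 24 := by
  obtain ⟨i, hi⟩ := ex_i
  obtain ⟨j, hj⟩ := ex_j
  obtain ⟨w, hw⟩ := ex_w
  refine card_closure sqrt_two_sq irrational_sqrt_two [mi, mj, mw] (LT 2 0) ?_ (by decide +kernel)
    (by decide +kernel) (by decide +kernel) ?_
  · rintro a (h | h | h)
    · exact ⟨mi, by simp, h.trans (val_mi _)⟩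
    · exact ⟨mj, by simp, h.trans (val_mj _)⟩
    · exact ⟨mw, by simp, h.trans (val_mw _)⟩
  · exact real_LT sqrt_two_sq ⟨i, Subgroup.subset_closure (Or.inl hi), hi.trans (val_mi _)⟩
      ⟨j, Subgroup.subset_closure (Or.inr (Or.inl hj)), hj.trans (val_mj _)⟩
      ⟨w, Subgroup.subset_closure (Or.inr (Or.inr hw)), hw.trans (val_mw _)⟩
      (by decide +kernel) (by decide +kernel) (by decide +kernel) (by decide +kernel)
      (by decide +kernel)

theorem card_oct : Nat.card BinOctQ = 48 := by
  obtain ⟨i, hi⟩ := ex_i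
  obtain ⟨j, hj⟩ := ex_j
  obtain ⟨w, hw⟩ := ex_w
  obtain ⟨s, hs⟩ := ex_s
  have e : BinOctQ = Subgroup.closure
      ({x : UnitQuat | (x : ℍ[ℝ]) = iQ ∨ (x : ℍ[ℝ]) = jQ ∨ (x : ℍ[ℝ]) = omegaQ} ∪
        {x : UnitQuat | (x : ℍ[ℝ]) = sigmaQ}) := by
    rw [BinOctQ, Subgroup.closure_union, Subgroup.closure_union, Subgroup.closure_eq, BinTetQ]
  rw [e]
  refine card_closure sqrt_two_sq irrational_sqrt_two [mi, mj, mw, ms] LO ?_ (by decide +kernel)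
    (by decide +kernel) (by decide +kernel) ?_
  · rintro a ((h | h | h) | h)
    · exact ⟨mi, by simp, h.trans (val_mi _)⟩
    · exact ⟨mj, by simp, h.trans (val_mj _)⟩
    · exact ⟨mw, by simp, h.trans (val_mw _)⟩
    · exact ⟨ms, by simp, h.trans val_ms⟩
  · refine real_prodL sqrt_two_sq (real_pows sqrt_two_sq
      ⟨s, Subgroup.subset_closure (Or.inr hs), hs.trans val_ms⟩ _ (by decide +kernel)) ?_
      (by decide +kernel)
    exact real_LT sqrt_two_sq
      ⟨i, Subgroup.subset_closure (Or.inl (Or.inl hi)), hi.trans (val_mi _)⟩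
      ⟨j, Subgroup.subset_closure (Or.inl (Or.inr (Or.inl hj))), hj.trans (val_mj _)⟩
      ⟨w, Subgroup.subset_closure (Or.inl (Or.inr (Or.inr hw))), hw.trans (val_mw _)⟩
      (by decide +kernel) (by decide +kernel) (by decide +kernel) (by decide +kernel)
      (by decide +kernel)

theorem card_ico : Nat.card BinIcoQ = 120 := by
  obtain ⟨i, hi⟩ := ex_i
  obtain ⟨j, hj⟩ := ex_j
  obtain ⟨w, hw⟩ := ex_w
  obtain ⟨s, hs⟩ := ex_t
  have e : BinIcoQ = Subgroup.closure
      ({x : UnitQuat | (x : ℍ[ℝ]) = iQ ∨ (x : ℍ[ℝ]) = jQ ∨ (x : ℍ[ℝ]) = omegaQ} ∪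
        {x : UnitQuat | (x : ℍ[ℝ]) = iotaQ}) := by
    rw [BinIcoQ, Subgroup.closure_union, Subgroup.closure_union, Subgroup.closure_eq, BinTetQ]
  rw [e]
  refine card_closure tau_sq tau_irr [mi, mj, mw, mt] LI ?_ (by decide +kernel)
    (by decide +kernel) (by decide +kernel) ?_
  · rintro a ((h | h | h) | h)
    · exact ⟨mi, by simp, h.trans (val_mi _)⟩
    · exact ⟨mj, by simp, h.trans (val_mj _)⟩
    · exact ⟨mw, by simp, h.trans (val_mw _)⟩
    · exact ⟨mt, by simp, h.trans val_mt⟩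
  · refine real_prodL tau_sq (real_pows tau_sq
      ⟨s, Subgroup.subset_closure (Or.inr hs), hs.trans val_mt⟩ _ (by decide +kernel)) ?_
      (by decide +kernel)
    exact real_LT tau_sq
      ⟨i, Subgroup.subset_closure (Or.inl (Or.inl hi)), hi.trans (val_mi _)⟩
      ⟨j, Subgroup.subset_closure (Or.inl (Or.inr (Or.inl hj))), hj.trans (val_mj _)⟩
      ⟨w, Subgroup.subset_closure (Or.inl (Or.inr (Or.inr hw))), hw.trans (val_mw _)⟩
      (by decide +kernel) (by decide +kernel) (by decide +kernel) (by decide +kernel)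
      (by decide +kernel)

/-! Cyclic and binary dihedral groups -/

/-- The circle of unit quaternions `cos t + sin t i`. -/
noncomputable def circ (t : ℝ) : ℍ[ℝ] := ⟨Real.cos t, Real.sin t, 0, 0⟩

theorem circ_re (t : ℝ) : (circ t).re = Real.cos t := rfl
theorem circ_imI (t : ℝ) : (circ t).imI = Real.sin t := rfl
theorem circ_imJ (t : ℝ) : (circ t).imJ = 0 := rfl
theorem circ_imK (t : ℝ) : (circ t).imK = 0 := rfl
theorem jQ_re : jQ.re = 0 := rfl
theorem jQ_imI : jQ.imI = 0 := rfl
theorem jQ_imJ : jQ.imJ = 1 := rfl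
theorem jQ_imK : jQ.imK = 0 := rfl

theorem circ_pow {z : UnitQuat} {t : ℝ} (hz : (z : ℍ[ℝ]) = circ t) (m : ℕ) :
    ((z ^ m : UnitQuat) : ℍ[ℝ]) = circ (m * t) := by
  induction m with
  | zero => rw [pow_zero]; ext <;> simp [circ]
  | succ m ih =>
    have : ((z ^ (m+1) : UnitQuat) : ℍ[ℝ]) = ((z ^ m : UnitQuat) : ℍ[ℝ]) * (z : ℍ[ℝ]) := by
      rw [pow_succ]; rfl
    rw [this, ih, hz]
    push_cast
    have e : ((m:ℝ) + 1) * t = m * t + t := by ring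
    rw [e]
    ext <;> simp only [Quaternion.re_mul, Quaternion.imI_mul, Quaternion.imJ_mul, Quaternion.imK_mul,
      circ_re, circ_imI, circ_imJ, circ_imK, jQ_re, jQ_imI, jQ_imJ, jQ_imK, Real.cos_add, Real.sin_add]
    · ring
    · ring
    · ring
    · ring

theorem order_zeta {n : ℕ} (hn : 1 ≤ n) {z : UnitQuat} (hz : (z : ℍ[ℝ]) = zetaQ n) :
    orderOf z = n := by
  have hz' : (z : ℍ[ℝ]) = circ (2 * Real.pi / n) := hz
  have hn0 : (n : ℝ) ≠ 0 := by positivity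
  rw [orderOf_eq_iff (by omega)]
  constructor
  · apply Subtype.ext
    rw [circ_pow hz', mul_div_cancel₀ _ hn0]
    change _ = (1 : ℍ[ℝ])
    ext <;> simp [circ]
  · intro m hm hm0 h
    have h2 := circ_pow hz' m
    rw [h] at h2
    have h3 : (1:ℝ) = Real.cos (m * (2 * Real.pi / n)) := congrArg (fun z : ℍ[ℝ] => z.re) h2
    have hmR : (0:ℝ) < m := by exact_mod_cast hm0
    have hnR : (0:ℝ) < n := by positivity
    have hmn : (m:ℝ) < n := by exact_mod_cast hm
    have hpos : 0 < (m:ℝ) * (2 * Real.pi / n) := by positivity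
    have hlt : (m:ℝ) * (2 * Real.pi / n) < 2 * Real.pi := by
      rw [← mul_div_assoc, div_lt_iff₀ hnR]
      nlinarith [Real.pi_pos]
    have := (Real.cos_eq_one_iff_of_lt_of_lt (by linarith [Real.pi_pos]) hlt).1 h3.symm
    linarith

theorem ex_z (n : ℕ) : ∃ x : UnitQuat, (x : ℍ[ℝ]) = zetaQ n :=
  exists_unit (by simp [zetaQ])

theorem card_cyc (n : ℕ) (hn : 1 ≤ n) : Nat.card (CyclicQ n) = n := by
  obtain ⟨z, hz⟩ := ex_z n
  have e : {x : UnitQuat | (x : ℍ[ℝ]) = zetaQ n} = {z} := by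
    ext x
    simp only [Set.mem_ofPred_eq, Set.mem_singleton_iff]
    rw [← hz]; exact Subtype.coe_inj
  rw [CyclicQ, e, ← Subgroup.zpowers_eq_closure, Nat.card_zpowers, order_zeta hn hz]

theorem card_dih (n : ℕ) (hn : 2 ≤ n) : Nat.card (BinDihQ n) = 4 * n := by
  obtain ⟨z, hz⟩ := ex_z (2 * n)
  obtain ⟨j, hj⟩ := ex_j
  have hord : orderOf z = 2 * n := order_zeta (by omega) hz
  have hfo : IsOfFinOrder z := by rw [← orderOf_pos_iff]; omega
  have hz' : (z : ℍ[ℝ]) = circ (2 * Real.pi / (2 * n : ℕ)) := hz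
  have hn0 : (n : ℝ) ≠ 0 := by positivity
  have hjj : j * j = z ^ n := by
    apply Subtype.ext
    rw [circ_pow hz']
    have e : (n:ℝ) * (2 * Real.pi / (2 * n : ℕ)) = Real.pi := by push_cast; field_simp
    rw [e]
    change (j : ℍ[ℝ]) * j = _
    rw [hj]
    ext <;> simp [Quaternion.re_mul, Quaternion.imI_mul, Quaternion.imJ_mul, Quaternion.imK_mul,
      circ_re, circ_imI, circ_imJ, circ_imK, jQ_re, jQ_imI, jQ_imJ, jQ_imK]
  have hzjz : z * j * z = j := by
    apply Subtype.ext
    change (z : ℍ[ℝ]) * j * z = j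
    rw [hj, hz']
    have hcs := Real.cos_sq_add_sin_sq (2 * Real.pi / (2 * n : ℕ))
    ext <;> simp only [Quaternion.re_mul, Quaternion.imI_mul, Quaternion.imJ_mul, Quaternion.imK_mul,
      circ_re, circ_imI, circ_imJ, circ_imK, jQ_re, jQ_imI, jQ_imJ, jQ_imK]
    · ring
    · ring
    · linear_combination hcs
    · ring
  have hjz : j * z = z⁻¹ * j := by rw [eq_inv_mul_iff_mul_eq, ← mul_assoc, hzjz]
  have hjzp : ∀ m : ℕ, j * z ^ m = (z ^ m)⁻¹ * j := by
    intro m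
    induction m with
    | zero => simp
    | succ m ih => rw [pow_succ, ← mul_assoc, ih, mul_assoc, hjz, mul_inv_rev, ← mul_assoc,
        ← mul_inv_rev, ← mul_inv_rev, ← pow_succ, ← pow_succ']
  set Z : Subgroup UnitQuat := Subgroup.zpowers z with hZ
  have hzZ : z ∈ Z := Subgroup.mem_zpowers z
  have hZpow : ∀ x ∈ Z, ∃ m : ℕ, z ^ m = x := fun x hx => by
    obtain ⟨m, hm⟩ := (hfo.mem_powers_iff_mem_zpowers).2 hx
    exact ⟨m, hm⟩
  have hZfin : (Z : Set UnitQuat).Finite := by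
    rw [hZ, finite_zpowers]; exact hfo
  have hZcard : (Z : Set UnitQuat).ncard = 2 * n := by
    rw [← hord, ← Nat.card_zpowers]; rfl
  have hjZ : ∀ x ∈ Z, j * x = x⁻¹ * j := by
    intro x hx
    obtain ⟨m, rfl⟩ := hZpow x hx
    exact hjzp m
  have hdisj : Disjoint (Z : Set UnitQuat) ((fun x => x * j) '' (Z : Set UnitQuat)) := by
    rw [Set.disjoint_left]
    rintro _ hx ⟨y, hy, rfl⟩
    have hjmem : j ∈ Z := (Z.mul_mem_cancel_left hy).1 hx
    obtain ⟨m, hm⟩ := hZpow j hjmem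
    have h := circ_pow hz' m
    rw [hm, hj] at h
    have : (1:ℝ) = 0 := congrArg (fun z : ℍ[ℝ] => z.imJ) h
    norm_num at this
  have hset : ((BinDihQ n : Subgroup UnitQuat) : Set UnitQuat) =
      (Z : Set UnitQuat) ∪ (fun x => x * j) '' (Z : Set UnitQuat) := by
    have hzB : z ∈ BinDihQ n := Subgroup.subset_closure (Or.inl hz)
    have hjB : j ∈ BinDihQ n := Subgroup.subset_closure (Or.inr hj)
    have hZB : Z ≤ BinDihQ n := by rw [hZ, Subgroup.zpowers_le]; exact hzB
    apply subset_antisymm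
    · apply closure_eq_of_stable (hZfin.union (hZfin.image _)) (Or.inl Z.one_mem)
      rintro a (ha | ha) s hs
      · have : a = z := Subtype.ext (ha.trans hz.symm)
        subst this
        rcases hs with hs | ⟨y, hy, rfl⟩
        · exact Or.inl (Z.mul_mem hzZ hs)
        · exact Or.inr ⟨a * y, Z.mul_mem hzZ hy, mul_assoc _ _ _⟩
      · have : a = j := Subtype.ext (ha.trans hj.symm)
        subst this
        rcases hs with hs | ⟨y, hy, rfl⟩
        · exact Or.inr ⟨s⁻¹, Z.inv_mem hs, (hjZ s hs).symm⟩
        · left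
          change a * (y * a) ∈ Z
          rw [← mul_assoc, hjZ y hy, mul_assoc, hjj]
          exact Z.mul_mem (Z.inv_mem hy) (Z.pow_mem hzZ n)
    · rintro x (hx | ⟨y, hy, rfl⟩)
      · exact hZB hx
      · exact (BinDihQ n).mul_mem (hZB hy) hjB
  change ((BinDihQ n : Subgroup UnitQuat) : Set UnitQuat).ncard = _
  rw [hset, Set.ncard_union_eq hdisj hZfin (hZfin.image _),
    Set.ncard_image_of_injective _ (mul_left_injective j), hZcard]
  ring

end QW

/-- The subgroups of the unit quaternion group have the expected orders: `C_n` has `n`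
elements (`n ≥ 1`), the binary dihedral group `D*₄ₙ` has `4n` elements (`n ≥ 2`), the
binary tetrahedral group `T*` has `24` elements, the binary octahedral group `O*` has
`48` elements, and the binary icosahedral group `I*` has `120` elements. -/
theorem stmt17 :
    (∀ n : ℕ, 1 ≤ n → Nat.card (CyclicQ n) = n) ∧
    (∀ n : ℕ, 2 ≤ n → Nat.card (BinDihQ n) = 4 * n) ∧
    Nat.card BinTetQ = 24 ∧ Nat.card BinOctQ = 48 ∧ Nat.card BinIcoQ = 120 := by
  exact ⟨QW.card_cyc, QW.card_dih, QW.card_tet, QW.card_oct, QW.card_ico⟩
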